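/- For any set 𝔓 of sequential laws that are locally absolutely continuous with respect to 𝚪, a nonnegative adapted process {M_t} is a nonnegative martingale for every law in 𝔓 if and only if it is a nonnegative martingale for every law in the fork-convex hull f-conv(𝔓). -/

import Mathlib

open MeasureTheory ProbabilityTheory Filter Finset Matrix
open scoped Classical

noncomputable section

namespace SeqTest

/-- `ℝ^d`. -/
abbrev RV (d : ℕ) := Fin d → ℝ

/-- The sequence space `Ω = (ℝ^d)^ℕ`. -/
abbrev Seq (d : ℕ) := ℕ → RV d

variable (d : ℕ)


/-- The first `t` coordinates of a sequence. -/
def prefixMap (t : ℕ) : Seq d → (Fin t → RV d) := fun ω s => ω s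

/-- The law of the first `t` coordinates under a sequential law `μ`. -/
def prefixLaw (μ : Measure (Seq d)) (t : ℕ) : Measure (Fin t → RV d) :=
  μ.map (prefixMap d t)

/-- The natural filtration of the coordinate process: `ℱ t = σ(X_0, …, X_{t-1})`. -/
def F : Filtration ℕ (inferInstance : MeasurableSpace (Seq d)) where
  seq t := ⨆ s ∈ Finset.range t, MeasurableSpace.comap (fun ω : Seq d => ω s) inferInstance
  mono' := by
    intro i j hij
    exact biSup_mono fun s hs => Finset.mem_range.mpr
      (lt_of_lt_of_le (Finset.mem_range.mp hs) hij)
  le' := by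
    intro t
    refine iSup₂_le fun s _ => ?_
    exact measurable_iff_comap_le.mp (measurable_pi_apply s)

/-- Local absolute continuity of sequential laws: every prefix law of `μ` is
absolutely continuous w.r.t. the corresponding prefix law of `Γ`. -/
def LocAC (μ Γ : Measure (Seq d)) : Prop := ∀ t, prefixLaw d μ t ≪ prefixLaw d Γ t

/-- The density (likelihood-ratio) process `Z_t^μ = d(μ|_t)/d(Γ|_t)` evaluated along the path. -/
def Z (μ Γ : Measure (Seq d)) (t : ℕ) (ω : Seq d) : ℝ :=
  ((prefixLaw d μ t).rnDeriv (prefixLaw d Γ t) (prefixMap d t ω)).toReal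

/-- The standard Gaussian measure on `ℝ^d`. -/
def stdGaussian : Measure (RV d) := Measure.pi fun _ => gaussianReal 0 1

/-- `Γ` is the law of an i.i.d. sequence of standard Gaussians: characterized through its
finite-dimensional rectangle probabilities. -/
def IsGamma (Γ : Measure (Seq d)) : Prop :=
  IsProbabilityMeasure Γ ∧
    ∀ (t : ℕ) (A : Fin t → Set (RV d)), (∀ s, MeasurableSet (A s)) →
      prefixLaw d Γ t (Set.univ.pi A) = ∏ s, stdGaussian d (A s)

/-- `M` is a nonnegative supermartingale for the sequential law `μ`
(w.r.t. the natural filtration). -/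
def IsNSM (μ : Measure (Seq d)) (M : ℕ → Seq d → ℝ) : Prop :=
  (∀ t ω, 0 ≤ M t ω) ∧ Supermartingale M (F d) μ

/-- `M` is a nonnegative martingale for the sequential law `μ`. -/
def IsNM (μ : Measure (Seq d)) (M : ℕ → Seq d → ℝ) : Prop :=
  (∀ t ω, 0 ≤ M t ω) ∧ Martingale M (F d) μ


/-- `R` is the `(s,h)`-fork-convex combination of `P` with `Q` (relative to the
reference law `Γ`), described through its density process. -/
def IsFCC (Γ P Q : Measure (Seq d)) (s : ℕ) (h : Seq d → ℝ) (R : Measure (Seq d)) : Prop :=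
  IsProbabilityMeasure P ∧ IsProbabilityMeasure Q ∧ LocAC d P Γ ∧ LocAC d Q Γ ∧
  Measurable[F d s] h ∧ (∀ ω, h ω ∈ Set.Icc (0 : ℝ) 1) ∧
  Γ {ω | h ω < 1 ∧ Z d Q Γ s ω = 0} = 0 ∧
  IsProbabilityMeasure R ∧ LocAC d R Γ ∧
  ∀ t : ℕ, (fun ω => Z d R Γ t ω) =ᵐ[Γ]
    (fun ω => if t ≤ s then Z d P Γ t ω
      else h ω * Z d P Γ t ω + (1 - h ω) * Z d Q Γ t ω * (Z d P Γ s ω / Z d Q Γ s ω))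

/-- A set of sequential laws is fork-convex if it is closed under fork-convex combinations. -/
def IsForkConvex (Γ : Measure (Seq d)) (S : Set (Measure (Seq d))) : Prop :=
  ∀ P ∈ S, ∀ Q ∈ S, ∀ (s : ℕ) (h : Seq d → ℝ) (R : Measure (Seq d)),
    IsFCC d Γ P Q s h R → R ∈ S

/-- The fork-convex hull: the smallest fork-convex set containing `𝔓`. -/
def fconv (Γ : Measure (Seq d)) (𝔓 : Set (Measure (Seq d))) : Set (Measure (Seq d)) :=
  ⋂₀ {S | 𝔓 ⊆ S ∧ IsForkConvex d Γ S}

/-- Convergence of sequential laws: the density processes converge in `L¹(Γ)` at every fixed time. -/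
def TendstoLocL1 (Γ : Measure (Seq d)) (Pn : ℕ → Measure (Seq d)) (P : Measure (Seq d)) : Prop :=
  ∀ t, Tendsto (fun n => ∫ ω, |Z d (Pn n) Γ t ω - Z d P Γ t ω| ∂Γ) atTop (nhds 0)

/-- The closed fork-convex hull: the closure of the fork-convex hull under local `L¹(Γ)`
convergence of density processes. -/
def clfconv (Γ : Measure (Seq d)) (𝔓 : Set (Measure (Seq d))) : Set (Measure (Seq d)) :=
  {P | IsProbabilityMeasure P ∧ LocAC d P Γ ∧
    ∃ Pn : ℕ → Measure (Seq d), (∀ n, Pn n ∈ fconv d Γ 𝔓) ∧ TendstoLocL1 d Γ Pn P}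

/-- `μ` is the law of an i.i.d. sequence with marginal `P`. -/
def IsIIDLaw (μ : Measure (Seq d)) (P : Measure (RV d)) : Prop :=
  IsProbabilityMeasure μ ∧
    ∀ (t : ℕ) (A : Fin t → Set (RV d)), (∀ s, MeasurableSet (A s)) →
      prefixLaw d μ t (Set.univ.pi A) = ∏ s, P (A s)

/-- `μ` is the law of an independent sequence with marginals `Ps 0, Ps 1, …`. -/
def IsProductLaw (μ : Measure (Seq d)) (Ps : ℕ → Measure (RV d)) : Prop :=
  IsProbabilityMeasure μ ∧
    ∀ (t : ℕ) (A : Fin t → Set (RV d)), (∀ s, MeasurableSet (A s)) →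
      prefixLaw d μ t (Set.univ.pi A) = ∏ s : Fin t, Ps s (A s)

/-- The set of i.i.d. sequential laws with marginals in `PP`. -/
def iidLaws (PP : Set (Measure (RV d))) : Set (Measure (Seq d)) :=
  {μ | ∃ P ∈ PP, IsIIDLaw d μ P}

/-- The set of independent-product sequential laws with all marginals in `PP`. -/
def productLaws (PP : Set (Measure (RV d))) : Set (Measure (Seq d)) :=
  {μ | ∃ Ps : ℕ → Measure (RV d), (∀ t, Ps t ∈ PP) ∧ IsProductLaw d μ Ps}




/-- The density of the `d`-dimensional Gaussian with mean `m` and covariance matrix `S`. -/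
def gaussDensityFn (m : RV d) (S : Matrix (Fin d) (Fin d) ℝ) (x : RV d) : ℝ :=
  (2 * Real.pi) ^ (-(d : ℝ) / 2) * S.det ^ (-(1 : ℝ) / 2) *
    Real.exp (-(1 / 2) * ((x - m) ⬝ᵥ (S⁻¹ *ᵥ (x - m))))

/-- A finite mixture of nondegenerate Gaussian densities. -/
def IsGaussianMixture (g : RV d → ℝ) : Prop :=
  ∃ (k : ℕ) (α : Fin k → ℝ) (ms : Fin k → RV d) (Ss : Fin k → Matrix (Fin d) (Fin d) ℝ),
    (∀ i, 0 ≤ α i) ∧ (∑ i, α i = 1) ∧ (∀ i, (Ss i).PosDef) ∧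
    g = fun x => ∑ i, α i * gaussDensityFn d (ms i) (Ss i) x

/-- A log-concave nonnegative function on `ℝ^d`. -/
def IsLogConcaveFn (p : RV d → ℝ) : Prop :=
  (∀ x, 0 ≤ p x) ∧
    ∀ (x y : RV d) (l : ℝ), 0 ≤ l → l ≤ 1 →
      p x ^ l * p y ^ (1 - l) ≤ p (l • x + (1 - l) • y)

/-- A log-concave probability density on `ℝ^d`. -/
def IsLogConcaveDensity (p : RV d → ℝ) : Prop :=
  Measurable p ∧ IsLogConcaveFn d p ∧ ∫ x, p x = 1

/-- The set `𝓛` of laws on `ℝ^d` with a log-concave Lebesgue density. -/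
def logConcaveLaws : Set (Measure (RV d)) :=
  {P | IsProbabilityMeasure P ∧ ∃ p : RV d → ℝ, Measurable p ∧ IsLogConcaveFn d p ∧
    P = volume.withDensity fun x => ENNReal.ofReal (p x)}

/-- The set `𝒢` of nondegenerate Gaussian laws on `ℝ^d`. -/
def gaussianLaws : Set (Measure (RV d)) :=
  {P | ∃ (m : RV d) (S : Matrix (Fin d) (Fin d) ℝ), S.PosDef ∧
    P = volume.withDensity fun x => ENNReal.ofReal (gaussDensityFn d m S x)}

/-- An estimator sequence: a measurable family of (strictly positive) predictable
probability density estimates. -/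
def IsEstimatorSeq (E : (t : ℕ) → (Fin t → RV d) → RV d → ℝ) : Prop :=
  (∀ t, Measurable fun q : (Fin t → RV d) × RV d => E t q.1 q.2) ∧
  (∀ t h x, 0 < E t h x) ∧ (∀ t h, ∫ x, E t h x = 1)

/-- The universal likelihood ratio (ULR) process. Time `t` corresponds to having observed
the `t` samples `ω 0, …, ω (t-1)`. -/
def ULR (E : (t : ℕ) → (Fin t → RV d) → RV d → ℝ) (t : ℕ) (ω : Seq d) : ℝ :=
  if t ≤ d then 1 else
    (∏ j ∈ Finset.Ico d t, E j (fun i : Fin j => ω i) (ω j)) /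
      ⨆ p : {p : RV d → ℝ // IsLogConcaveDensity d p}, ∏ j ∈ Finset.Ico d t, p.1 (ω j)

/-- The prediction (cumulative log-loss) regret of the estimator sequence `E` relative to
the density of `P`. -/
def regret (P : Measure (RV d)) (E : (t : ℕ) → (Fin t → RV d) → RV d → ℝ)
    (t : ℕ) (ω : Seq d) : ℝ :=
  ∑ j ∈ Finset.range t,
    (Real.log ((P.rnDeriv volume (ω j)).toReal) - Real.log (E j (fun i : Fin j => ω i) (ω j)))

/-- The Hellinger distance between two laws on `ℝ^d` (via their Lebesgue densities). -/
def hellinger (P Q : Measure (RV d)) : ℝ :=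
  Real.sqrt ((1 / 2) *
    ∫ x, (Real.sqrt ((P.rnDeriv volume x).toReal) - Real.sqrt ((Q.rnDeriv volume x).toReal)) ^ 2)

/-- The Hellinger distance from `P` to the class of log-concave laws. -/
def dHLC (P : Measure (RV d)) : ℝ :=
  sInf {r | ∃ L ∈ logConcaveLaws d, r = hellinger d P L}

/-- The Kullback–Leibler divergence. -/
def klDivR {α : Type*} [MeasurableSpace α] (P Q : Measure α) : EReal :=
  if P ≪ Q ∧ Integrable (fun x => Real.log ((P.rnDeriv Q x).toReal)) P
  then ((∫ x, Real.log ((P.rnDeriv Q x).toReal) ∂P : ℝ) : EReal) else ⊤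

/-- Membership in `𝒟₁`. -/
def MemD1 (P : Measure (RV d)) : Prop :=
  IsProbabilityMeasure P ∧ P ≪ volume ∧
  Integrable (fun x => max 0 (Real.log ((P.rnDeriv volume x).toReal))) P ∧
  Integrable (fun x => Real.sqrt (∑ i, (x i) ^ 2)) P

/-- The log-likelihood gap `σ_t(P)` between the true density and the log-concave maximum
likelihood. -/
def sigmaT (P : Measure (RV d)) (t : ℕ) (ω : Seq d) : ℝ :=
  (∑ j ∈ Finset.range t, Real.log ((P.rnDeriv volume (ω j)).toReal)) -
    ⨆ p : {p : RV d → ℝ // IsLogConcaveDensity d p},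
      ∑ j ∈ Finset.range t, Real.log (p.1 (ω j))

/-- The mean vector of `P`. -/
def meanVec (P : Measure (RV d)) : RV d := fun i => ∫ x, x i ∂P

/-- `Δ_P = min_{‖v‖=1} E_P |⟨v, X − E_P X⟩|`. -/
def DeltaP (P : Measure (RV d)) : ℝ :=
  sInf {r | ∃ v : RV d, (∑ i, (v i) ^ 2) = 1 ∧
    r = ∫ x, |∑ i, v i * (x i - meanVec d P i)| ∂P}

/-- The class `𝒟_{Box,Lip,B}`: laws with a `1`-Lipschitz density supported on `[-1,1]^d`
taking values in `[1/B, B]` there. -/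
def DBoxLip (B : ℝ) : Set (Measure (RV d)) :=
  {P | IsProbabilityMeasure P ∧ ∃ p : RV d → ℝ, Measurable p ∧
    P = volume.withDensity (fun x => ENNReal.ofReal (p x)) ∧
    (∀ x, ¬ (∀ i, |x i| ≤ 1) → p x = 0) ∧
    (∀ x, (∀ i, |x i| ≤ 1) → 1 / B ≤ p x ∧ p x ≤ B) ∧
    (∀ x y, (∀ i, |x i| ≤ 1) → (∀ i, |y i| ≤ 1) →
      |p x - p y| ≤ Real.sqrt (∑ i, (x i - y i) ^ 2))}

/-!
Let `R` be the `(s,h)`-fork-convex combination of `P` with `Q`. On `ℱ t` the laws `R` and `P` agree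
for `t ≤ s`, while for `t ≥ s` the law `R` is `h · P + w · Q` with the `ℱ s`-measurable weight
`w = (1 - h) · Z_s^P / Z_s^Q`. The one-step martingale identity at time `t` only involves the law on
`ℱ (t + 1)`, it survives reweighting by an `ℱ t`-measurable density, and it is additive in the law.
So it passes from `P` and `Q` to `R`, and the laws under which `M` is a nonnegative martingale form
a fork-convex set.
-/

section ConditionalExpectation

open scoped ENNReal

variable {Ω : Type*} {m m' m0 : MeasurableSpace Ω} {μ ν : Measure Ω} {f g w : Ω → ℝ≥0∞}

/-- `f` and `g` have the same conditional expectation given `m` under `μ`. This is encoded by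
comparing the measures with densities `f` and `g` on `m`, so that no finiteness is required. -/
def LCondExpEq (hm : m ≤ m0) (μ : Measure[m0] Ω) (f g : Ω → ℝ≥0∞) : Prop :=
  (μ.withDensity f).trim hm = (μ.withDensity g).trim hm

theorem lcondExpEq_iff_setLIntegral_eq (hm : m ≤ m0) :
    LCondExpEq hm μ f g ↔
      ∀ A, MeasurableSet[m] A → ∫⁻ ω in A, f ω ∂μ = ∫⁻ ω in A, g ω ∂μ := by
  have trim_apply (u : Ω → ℝ≥0∞) {A : Set Ω} (hA : MeasurableSet[m] A) :
      (μ.withDensity u).trim hm A = ∫⁻ ω in A, u ω ∂μ := by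
    rw [trim_measurableSet_eq hm hA, withDensity_apply _ (hm A hA)]
  refine ⟨fun h A hA => ?_, fun h => @Measure.ext _ m _ _ fun A hA => ?_⟩
  · rw [← trim_apply f hA, ← trim_apply g hA, h]
  · rw [trim_apply f hA, trim_apply g hA, h A hA]

namespace LCondExpEq

theorem withDensity {hm : m ≤ m0} (h : LCondExpEq hm μ f g) (hf : Measurable f)
    (hg : Measurable g) (hw : Measurable[m] w) : LCondExpEq hm (μ.withDensity w) f g := by
  have swap {u : Ω → ℝ≥0∞} (hu : Measurable u) :
      ((μ.withDensity w).withDensity u).trim hm = ((μ.withDensity u).trim hm).withDensity w := by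
    have hw' := hw.mono hm le_rfl
    rw [← withDensity_mul μ hw' hu, mul_comm, withDensity_mul μ hu hw', trim_withDensity hm hw]
  unfold LCondExpEq at h ⊢
  rw [swap hf, swap hg, h]

theorem add_measure {hm : m ≤ m0} (hμ : LCondExpEq hm μ f g) (hν : LCondExpEq hm ν f g) :
    LCondExpEq hm (μ + ν) f g := by
  unfold LCondExpEq at hμ hν ⊢
  simp only [withDensity_add_measure, trim_add, hμ, hν]

theorem congr_trim {hm : m ≤ m0} {hm' : m' ≤ m0} (h : LCondExpEq hm μ f g) (hmm' : m ≤ m')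
    (hμν : μ.trim hm' = ν.trim hm') (hf : Measurable[m'] f) (hg : Measurable[m'] g) :
    LCondExpEq hm ν f g := by
  have factor (ρ : Measure[m0] Ω) {u : Ω → ℝ≥0∞} (hu : Measurable[m'] u) :
      (ρ.withDensity u).trim hm = ((ρ.trim hm').withDensity u).trim hmm' := by
    rw [← trim_withDensity hm' hu, trim_trim]
  unfold LCondExpEq at h ⊢
  rwa [factor μ hf, factor μ hg, hμν, ← factor ν hf, ← factor ν hg] at h

end LCondExpEq

end ConditionalExpectation

section Martingale

open scoped ENNReal

variable {Ω : Type*} {m0 : MeasurableSpace Ω} {μ : Measure Ω}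

theorem lcondExpEq_of_martingale {ι : Type*} [Preorder ι] {ℱ : Filtration ι m0} {M : ι → Ω → ℝ}
    [SigmaFiniteFiltration μ ℱ] (hM : Martingale M ℱ μ) (h0 : ∀ t, 0 ≤ᵐ[μ] M t) {i j : ι}
    (hij : i ≤ j) :
    LCondExpEq (ℱ.le i) μ (fun ω => ENNReal.ofReal (M i ω)) fun ω => ENNReal.ofReal (M j ω) := by
  rw [lcondExpEq_iff_setLIntegral_eq]
  intro A hA
  rw [← ofReal_integral_eq_lintegral_ofReal (hM.integrable i).integrableOn
      (ae_restrict_of_ae (h0 i)), hM.setIntegral_eq hij hA,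
    ofReal_integral_eq_lintegral_ofReal (hM.integrable j).integrableOn
      (ae_restrict_of_ae (h0 j))]

variable {ℱ : Filtration ℕ m0} {M : ℕ → Ω → ℝ}

theorem integrable_of_lcondExpEq_succ (hadp : StronglyAdapted ℱ M) (h0 : ∀ t, 0 ≤ᵐ[μ] M t)
    (hint : Integrable (M 0) μ)
    (hM : ∀ t, LCondExpEq (ℱ.le t) μ (fun ω => ENNReal.ofReal (M t ω))
      fun ω => ENNReal.ofReal (M (t + 1) ω)) (t : ℕ) : Integrable (M t) μ := by
  have integrable_iff (t : ℕ) := lintegral_ofReal_ne_top_iff_integrable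
    ((hadp t).mono (ℱ.le t)).aestronglyMeasurable (h0 t)
  induction t with
  | zero => exact hint
  | succ t ih =>
    have lintegral_eq := (lcondExpEq_iff_setLIntegral_eq (ℱ.le t)).1 (hM t) Set.univ .univ
    rw [setLIntegral_univ, setLIntegral_univ] at lintegral_eq
    rwa [← integrable_iff, ← lintegral_eq, integrable_iff]

theorem martingale_of_lcondExpEq_succ [IsFiniteMeasure μ] (hadp : StronglyAdapted ℱ M)
    (h0 : ∀ t, 0 ≤ᵐ[μ] M t) (hint : Integrable (M 0) μ)
    (hM : ∀ t, LCondExpEq (ℱ.le t) μ (fun ω => ENNReal.ofReal (M t ω))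
      fun ω => ENNReal.ofReal (M (t + 1) ω)) : Martingale M ℱ μ := by
  have hsm (t : ℕ) : AEStronglyMeasurable (M t) μ := ((hadp t).mono (ℱ.le t)).aestronglyMeasurable
  refine martingale_of_setIntegral_eq_succ hadp
    (integrable_of_lcondExpEq_succ hadp h0 hint hM) fun t A hA => ?_
  rw [integral_eq_lintegral_of_nonneg_ae (ae_restrict_of_ae (h0 t)) (hsm t).restrict,
    integral_eq_lintegral_of_nonneg_ae (ae_restrict_of_ae (h0 (t + 1))) (hsm (t + 1)).restrict,
    (lcondExpEq_iff_setLIntegral_eq (ℱ.le t)).1 (hM t) A hA]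

/-- `R` follows `P` up to time `s` and is the mixture `a · P + b · Q` on every later `ℱ t`, with
weights known at time `s`. For `a = h` and `b = (1 - h) · Z_s^P / Z_s^Q` this is the fork-convex
combination, stated without reference to a dominating law. -/
structure IsFork (ℱ : Filtration ℕ m0) (P Q R : Measure Ω) (s : ℕ) (a b : Ω → ℝ≥0∞) : Prop where
  measurable_left : Measurable[ℱ s] a
  measurable_right : Measurable[ℱ s] b
  trim_eq_of_le : ∀ t ≤ s, P.trim (ℱ.le t) = R.trim (ℱ.le t)
  trim_eq_of_ge : ∀ t ≥ s,
    (P.withDensity a + Q.withDensity b).trim (ℱ.le t) = R.trim (ℱ.le t)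

theorem IsFork.martingale {P Q R : Measure Ω} [SigmaFiniteFiltration P ℱ]
    [SigmaFiniteFiltration Q ℱ] [IsFiniteMeasure R] {s : ℕ} {a b : Ω → ℝ≥0∞}
    (hR : IsFork ℱ P Q R s a b) (h0 : ∀ t ω, 0 ≤ M t ω) (hP : Martingale M ℱ P)
    (hQ : Martingale M ℱ Q) : Martingale M ℱ R := by
  have hadp := hP.stronglyAdapted
  have nonneg (μ : Measure Ω) (t : ℕ) : 0 ≤ᵐ[μ] M t := ae_of_all _ (h0 t)
  have measurable_F {i j : ℕ} (hij : i ≤ j) : Measurable[ℱ j] fun ω => ENNReal.ofReal (M i ω) :=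
    (hadp.stronglyMeasurable_le hij).measurable.ennreal_ofReal
  have hM (t : ℕ) : Measurable fun ω => ENNReal.ofReal (M t ω) :=
    (measurable_F le_rfl).mono (ℱ.le t) le_rfl
  have hint : Integrable (M 0) R := by
    refine integrable_of_integrable_trim (ℱ.le 0) ?_
    rw [← hR.trim_eq_of_le 0 s.zero_le]
    exact (hP.integrable 0).trim (ℱ.le 0) (hadp 0)
  refine martingale_of_lcondExpEq_succ hadp (nonneg R) hint fun t => ?_
  have stepP := lcondExpEq_of_martingale hP (nonneg P) t.le_succ
  have stepQ := lcondExpEq_of_martingale hQ (nonneg Q) t.le_succ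
  rcases Nat.lt_or_ge t s with hts | hst
  · exact stepP.congr_trim (ℱ.mono t.le_succ) (hR.trim_eq_of_le (t + 1) hts)
      (measurable_F t.le_succ) (measurable_F le_rfl)
  · have ha := hR.measurable_left.mono (ℱ.mono hst) le_rfl
    have hb := hR.measurable_right.mono (ℱ.mono hst) le_rfl
    have stepMix := (stepP.withDensity (hM t) (hM (t + 1)) ha).add_measure
      (stepQ.withDensity (hM t) (hM (t + 1)) hb)
    exact stepMix.congr_trim (ℱ.mono t.le_succ) (hR.trim_eq_of_ge (t + 1) (hst.trans t.le_succ))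
      (measurable_F t.le_succ) (measurable_F le_rfl)

end Martingale

theorem withDensity_rnDeriv_map_comp_preimage {Ω E : Type*} {mΩ : MeasurableSpace Ω}
    {mE : MeasurableSpace E} {μ ν : Measure Ω} {f : Ω → E} (hf : Measurable f)
    [(μ.map f).HaveLebesgueDecomposition (ν.map f)] (hμν : μ.map f ≪ ν.map f) {B : Set E}
    (hB : MeasurableSet B) :
    ν.withDensity (fun ω => (μ.map f).rnDeriv (ν.map f) (f ω)) (f ⁻¹' B) = μ (f ⁻¹' B) := by
  rw [withDensity_apply _ (hf hB), ← setLIntegral_map hB (Measure.measurable_rnDeriv _ _) hf,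
    Measure.setLIntegral_rnDeriv' hμν hB, Measure.map_apply hf hB]

section SequentialLaws

variable {d : ℕ} {Γ P Q R : Measure (Seq d)} {s t : ℕ} {h : Seq d → ℝ}

theorem measurable_prefixMap (t : ℕ) : Measurable (prefixMap d t) :=
  measurable_pi_iff.2 fun i => measurable_pi_apply (i : ℕ)

theorem measurable_coord (hst : s < t) : Measurable[F d t] fun ω : Seq d => ω s := by
  rw [measurable_iff_comap_le]
  exact le_iSup₂_of_le
    (f := fun (i : ℕ) (_ : i ∈ Finset.range t) =>
      MeasurableSpace.comap (fun ω : Seq d => ω i) inferInstance)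
    s (Finset.mem_range.2 hst) le_rfl

theorem F_eq_comap_prefixMap (t : ℕ) :
    F d t = MeasurableSpace.comap (prefixMap d t) inferInstance := by
  refine le_antisymm (iSup₂_le fun i hi => ?_) ?_
  · have coord_eq : (fun ω : Seq d => ω i) =
        (fun x => x ⟨i, Finset.mem_range.1 hi⟩) ∘ prefixMap d t := rfl
    rw [← measurable_iff_comap_le, coord_eq]
    exact (measurable_pi_apply _).comp (comap_measurable _)
  · rw [← measurable_iff_comap_le]
    exact @measurable_pi_lambda _ _ _ (F d t) _ _ fun i => measurable_coord i.2

instance [IsFiniteMeasure P] : IsFiniteMeasure (prefixLaw d P t) :=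
  Measure.isFiniteMeasure_map P (prefixMap d t)

theorem measurable_Z (P Γ : Measure (Seq d)) (t : ℕ) : Measurable[F d t] (Z d P Γ t) := by
  rw [F_eq_comap_prefixMap]
  exact (Measure.measurable_rnDeriv _ _).ennreal_toReal.comp (comap_measurable _)

theorem Z_nonneg (P Γ : Measure (Seq d)) (t : ℕ) (ω : Seq d) : 0 ≤ Z d P Γ t ω :=
  ENNReal.toReal_nonneg

theorem ofReal_Z_ae_eq [IsFiniteMeasure P] (t : ℕ) :
    (fun ω => ENNReal.ofReal (Z d P Γ t ω)) =ᵐ[Γ]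
      fun ω => (prefixLaw d P t).rnDeriv (prefixLaw d Γ t) (prefixMap d t ω) := by
  filter_upwards [ae_of_ae_map (measurable_prefixMap t).aemeasurable
    (Measure.rnDeriv_ne_top (prefixLaw d P t) (prefixLaw d Γ t))] with ω hω
  exact ENNReal.ofReal_toReal hω

theorem LocAC.trim_withDensity_Z [IsFiniteMeasure P] [IsFiniteMeasure Γ] (hP : LocAC d P Γ)
    (t : ℕ) :
    (Γ.withDensity fun ω => ENNReal.ofReal (Z d P Γ t ω)).trim ((F d).le t) =
      P.trim ((F d).le t) := by
  refine @Measure.ext _ (F d t) _ _ fun A hA => ?_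
  rw [trim_measurableSet_eq _ hA, trim_measurableSet_eq _ hA,
    withDensity_congr_ae (ofReal_Z_ae_eq t)]
  rw [F_eq_comap_prefixMap] at hA
  obtain ⟨B, hB, rfl⟩ := hA
  have : (P.map (prefixMap d t)).HaveLebesgueDecomposition (Γ.map (prefixMap d t)) :=
    inferInstanceAs ((prefixLaw d P t).HaveLebesgueDecomposition (prefixLaw d Γ t))
  exact withDensity_rnDeriv_map_comp_preimage (measurable_prefixMap t) (hP t) hB

/-- The weight `(1 - h) · Z_s^P / Z_s^Q` given to `Q` by the `(s,h)`-fork-convex combination of `P`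
with `Q`. -/
def forkWeight (Γ P Q : Measure (Seq d)) (s : ℕ) (h : Seq d → ℝ) (ω : Seq d) : ℝ :=
  (1 - h ω) * (Z d P Γ s ω / Z d Q Γ s ω)

theorem measurable_forkWeight (hh : Measurable[F d s] h) :
    Measurable[F d s] (forkWeight Γ P Q s h) :=
  (measurable_const.sub hh).mul ((measurable_Z P Γ s).div (measurable_Z Q Γ s))

theorem forkWeight_nonneg {ω : Seq d} (hω : h ω ≤ 1) : 0 ≤ forkWeight Γ P Q s h ω :=
  mul_nonneg (sub_nonneg.2 hω) (div_nonneg (Z_nonneg P Γ s ω) (Z_nonneg Q Γ s ω))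

namespace IsFCC

theorem Z_ae_eq_of_ge (hR : IsFCC d Γ P Q s h R) (hst : s ≤ t) :
    Z d R Γ t =ᵐ[Γ]
      fun ω => Z d P Γ t ω * h ω + Z d Q Γ t ω * forkWeight Γ P Q s h ω := by
  obtain ⟨-, -, -, -, -, hI, hnull, -, -, hZ⟩ := hR
  have hnull' : ∀ᵐ ω ∂Γ, h ω < 1 → Z d Q Γ s ω ≠ 0 := by
    simpa only [ae_iff, Classical.not_imp, not_not] using hnull
  filter_upwards [hZ t, hnull'] with ω hω hne
  rw [hω, forkWeight]
  split_ifs with hts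
  · -- At `t = s` the right-hand side collapses to `Z_s^P`, as `Z_s^Q ≠ 0` wherever `h < 1`.
    obtain rfl := le_antisymm hts hst
    rcases (hI ω).2.eq_or_lt with h_eq | h_lt
    · simp [h_eq]
    · have := hne h_lt
      field_simp
      ring
  · ring

theorem ofReal_Z_ae_eq_of_ge (hR : IsFCC d Γ P Q s h R) (hst : s ≤ t) :
    (fun ω => ENNReal.ofReal (Z d R Γ t ω)) =ᵐ[Γ]
      (fun ω => ENNReal.ofReal (Z d P Γ t ω)) * (fun ω => ENNReal.ofReal (h ω)) +
        (fun ω => ENNReal.ofReal (Z d Q Γ t ω)) *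
          fun ω => ENNReal.ofReal (forkWeight Γ P Q s h ω) := by
  filter_upwards [hR.Z_ae_eq_of_ge hst] with ω hω
  obtain ⟨-, -, -, -, -, hI, -⟩ := hR
  have hP := Z_nonneg P Γ t ω
  have hQ := Z_nonneg Q Γ t ω
  have hw : 0 ≤ forkWeight Γ P Q s h ω := forkWeight_nonneg (hI ω).2
  simp only [hω, Pi.add_apply, Pi.mul_apply, ENNReal.ofReal_mul hP, ENNReal.ofReal_mul hQ,
    ENNReal.ofReal_add (mul_nonneg hP (hI ω).1) (mul_nonneg hQ hw)]

variable [IsFiniteMeasure Γ]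

theorem trim_eq_of_le (hR : IsFCC d Γ P Q s h R) (hts : t ≤ s) :
    P.trim ((F d).le t) = R.trim ((F d).le t) := by
  obtain ⟨_, _, hPΓ, -, -, -, -, _, hRΓ, hZ⟩ := hR
  rw [← hPΓ.trim_withDensity_Z t, ← hRΓ.trim_withDensity_Z t]
  congr 1
  refine withDensity_congr_ae ?_
  filter_upwards [hZ t] with ω hω
  rw [hω, if_pos hts]

theorem trim_eq_of_ge (hR : IsFCC d Γ P Q s h R) (hst : s ≤ t) :
    (P.withDensity (fun ω => ENNReal.ofReal (h ω)) +
        Q.withDensity fun ω => ENNReal.ofReal (forkWeight Γ P Q s h ω)).trim ((F d).le t) =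
      R.trim ((F d).le t) := by
  have density_eq := withDensity_congr_ae (hR.ofReal_Z_ae_eq_of_ge hst)
  obtain ⟨_, _, hPΓ, hQΓ, hh, -, -, _, hRΓ, -⟩ := hR
  have hFst := (F d).mono hst
  have hh_t : Measurable[F d t] fun ω => ENNReal.ofReal (h ω) :=
    (hh.mono hFst le_rfl).ennreal_ofReal
  have hw_t : Measurable[F d t] fun ω => ENNReal.ofReal (forkWeight Γ P Q s h ω) :=
    ((measurable_forkWeight hh).mono hFst le_rfl).ennreal_ofReal
  have measurable_of_F {u : Seq d → ENNReal} (hu : Measurable[F d t] u) : Measurable u :=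
    hu.mono ((F d).le t) le_rfl
  have hZ_meas (μ : Measure (Seq d)) : Measurable fun ω => ENNReal.ofReal (Z d μ Γ t ω) :=
    measurable_of_F (measurable_Z μ Γ t).ennreal_ofReal
  rw [← hRΓ.trim_withDensity_Z t, density_eq,
    withDensity_add_left ((hZ_meas P).mul (measurable_of_F hh_t)),
    withDensity_mul Γ (hZ_meas P) (measurable_of_F hh_t),
    withDensity_mul Γ (hZ_meas Q) (measurable_of_F hw_t)]
  simp only [trim_add, trim_withDensity _ hh_t, trim_withDensity _ hw_t,
    hPΓ.trim_withDensity_Z t, hQΓ.trim_withDensity_Z t]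

theorem isFork (hR : IsFCC d Γ P Q s h R) :
    IsFork (F d) P Q R s (fun ω => ENNReal.ofReal (h ω))
      fun ω => ENNReal.ofReal (forkWeight Γ P Q s h ω) where
  measurable_left := have ⟨_, _, _, _, hh, _⟩ := hR; hh.ennreal_ofReal
  measurable_right := have ⟨_, _, _, _, hh, _⟩ := hR; (measurable_forkWeight hh).ennreal_ofReal
  trim_eq_of_le _ := hR.trim_eq_of_le
  trim_eq_of_ge _ := hR.trim_eq_of_ge

theorem isNM (hR : IsFCC d Γ P Q s h R) {M : ℕ → Seq d → ℝ} (hP : IsNM d P M)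
    (hQ : IsNM d Q M) : IsNM d R M := by
  have ⟨_, _, _, _, _, _, _, _, _⟩ := hR
  exact ⟨hP.1, hR.isFork.martingale hP.1 hP.2 hQ.2⟩

end IsFCC

theorem isForkConvex_setOf_isNM [IsFiniteMeasure Γ] (M : ℕ → Seq d → ℝ) :
    IsForkConvex d Γ {P | IsNM d P M} :=
  fun _ hP _ hQ _ _ _ hR => hR.isNM hP hQ

theorem subset_fconv (Γ : Measure (Seq d)) (PP : Set (Measure (Seq d))) : PP ⊆ fconv d Γ PP :=
  Set.subset_sInter fun _ hS => hS.1

theorem fconv_subset {PP S : Set (Measure (Seq d))} (hPP : PP ⊆ S) (hS : IsForkConvex d Γ S) :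
    fconv d Γ PP ⊆ S :=
  Set.sInter_subset_of_mem ⟨hPP, hS⟩

theorem statement3_general [IsFiniteMeasure Γ] (PP : Set (Measure (Seq d)))
    (M : ℕ → Seq d → ℝ) :
    (∀ P ∈ PP, IsNM d P M) ↔ ∀ P ∈ fconv d Γ PP, IsNM d P M :=
  ⟨fun hM => fconv_subset hM (isForkConvex_setOf_isNM M),
    fun hM P hP => hM P (subset_fconv Γ PP hP)⟩

end SequentialLaws

/-- A process is an NM for every law in `PP` iff it is an NM for every
law in the fork-convex hull of `PP`. -/
theorem statement3 (Γ : Measure (Seq d)) (hΓ : IsGamma d Γ)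
    (PP : Set (Measure (Seq d))) (hPP : ∀ P ∈ PP, IsProbabilityMeasure P ∧ LocAC d P Γ)
    (M : ℕ → Seq d → ℝ) :
    (∀ P ∈ PP, IsNM d P M) ↔ (∀ P ∈ fconv d Γ PP, IsNM d P M) :=
  have := hΓ.1
  statement3_general PP M

end SeqTest
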